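/- There exist constants c1, c2 > 0 such that for all sufficiently large even N the following holds. Let g ∈ G[X] be the Raz–Yehudayoff polynomial on X = {x_1,…,x_N}. Suppose g = f_1 + ⋯ + f_m where, for each i, f_i is computed by an r-pass syntactically multilinear ABP of width s_i ≥ 2 over G, and let s = max{s_1,…,s_m}. Then m ≥ 2^{c1·N^{1/5}} / s^{c2·(r + log N)}. -/

import Mathlib

open MvPolynomial

noncomputable section

/-- A multilinear polynomial: every exponent is at most 1. -/
def MLin {σ : Type*} {K : Type*} [CommSemiring K] (f : MvPolynomial σ K) : Prop :=
  ∀ d ∈ f.support, ∀ i, d i ≤ 1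

/-- The partial derivative matrix of a multilinear polynomial over Y ∪ Z
(Y = `inl`-variables, Z = `inr`-variables), rows and columns indexed by subsets. -/
def pdm {h : ℕ} {K : Type*} [CommSemiring K] (f : MvPolynomial (Fin h ⊕ Fin h) K) :
    Matrix (Finset (Fin h)) (Finset (Fin h)) K := fun S T =>
  f.coeff ((∑ i ∈ S, Finsupp.single (Sum.inl i) 1) + ∑ j ∈ T, Finsupp.single (Sum.inr j) 1)

/-- The field G = F(W), the field of rational functions over F in variables
`w_{i,k,j}`, `i,k,j ∈ ℕ`. -/
abbrev Gf (F : Type*) [Field F] : Type _ := FractionRing (MvPolynomial (ℕ × ℕ × ℕ) F)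

/-- The element w_{i,k,j} of G. -/
def wv (F : Type*) [Field F] (i k j : ℕ) : Gf F :=
  algebraMap (MvPolynomial (ℕ × ℕ × ℕ) F) (Gf F) (MvPolynomial.X (i, k, j))

/-- The Raz–Yehudayoff polynomials `g_{i,j}` (first argument is fuel; every
recursive call reduces `j - i` by at least 2, so fuel `N` suffices for `g_{1,N}`). -/
def RY (F : Type*) [Field F] : ℕ → ℕ → ℕ → MvPolynomial ℕ (Gf F)
  | 0, _, _ => 1
  | fuel + 1, i, j =>
      if j < i then 1
      else (1 + X i * X j) * RY F fuel (i + 1) (j - 1)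
        + ∑ k ∈ (Finset.Icc (i + 1) (j - 2)).filter (fun k => (k - i) % 2 = 1),
            C (wv F i k j) * RY F fuel i k * RY F fuel (k + 1) j

/-- The Raz–Yehudayoff polynomial `g = g_{1,N}`, in the variables `x_1, …, x_N`. -/
def razPoly (F : Type*) [Field F] (N : ℕ) : MvPolynomial ℕ (Gf F) := RY F N 1 N

/-- `|φ(S) ∩ Y|` for a partition function φ. -/
def yCount {h : ℕ} (φ : ℕ → Fin h ⊕ Fin h) (S : Finset ℕ) : ℕ :=
  (S.filter fun x => (φ x).isLeft = true).card

/-- `|φ(S) ∩ Z|` for a partition function φ. -/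
def zCount {h : ℕ} (φ : ℕ → Fin h ⊕ Fin h) (S : Finset ℕ) : ℕ :=
  (S.filter fun x => (φ x).isRight = true).card

/-- `S` is `k`-unbalanced with respect to the partition φ. -/
def kUnb {h : ℕ} (φ : ℕ → Fin h ⊕ Fin h) (k : ℕ) (S : Finset ℕ) : Prop :=
  (k : ℤ) ≤ |(yCount φ S : ℤ) - (zCount φ S : ℤ)|

/-- Extension of a partition given on `X` to all of ℕ (junk value elsewhere). -/
def extPart {h : ℕ} (hh : 0 < h) (X : Finset ℕ) (e : {x // x ∈ X} → Fin h ⊕ Fin h) :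
    ℕ → Fin h ⊕ Fin h := fun x =>
  if hx : x ∈ X then e ⟨x, hx⟩ else Sum.inl ⟨0, hh⟩

/-- Probability of an event under the uniform distribution on a finite type. -/
def unifProb {Ω : Type*} [Fintype Ω] (p : Ω → Prop) : ℝ :=
  haveI := Classical.decPred p
  ((Finset.univ.filter p).card : ℝ) / (Fintype.card Ω : ℝ)

/-- The (1,1) entry of the product `M 0 * M 1 * ⋯ * M (n-1)`. -/
def mprodVal {K : Type*} [CommSemiring K] {n w : ℕ} (hw : 0 < w)
    (M : Fin n → Matrix (Fin w) (Fin w) (MvPolynomial ℕ K)) : MvPolynomial ℕ K :=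
  (List.ofFn M).prod ⟨0, hw⟩ ⟨0, hw⟩

/-- An oblivious read-once ABP of width `w` in variables `x_1, …, x_N` with
variable order π (a permutation of `{1, …, N}`): the ℓ-th layer matrix has
entries of degree at most 1 in the single variable `x_{π(ℓ)}`. -/
def IsROABP {K : Type*} [CommSemiring K] (N w : ℕ) (π : ℕ → ℕ)
    (M : Fin N → Matrix (Fin w) (Fin w) (MvPolynomial ℕ K)) : Prop :=
  Set.BijOn π (Set.Icc 1 N) (Set.Icc 1 N) ∧
    ∀ ℓ : Fin N, ∀ i j, ∃ a b : K, M ℓ i j = C a + C b * X (π (ℓ.val + 1))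

/-- An `r`-pass syntactically multilinear ABP of width `w`. -/
def IsRPass {K : Type*} [CommSemiring K] (N w r : ℕ) (π : Fin r → ℕ → ℕ)
    (M : Fin (r * N) → Matrix (Fin w) (Fin w) (MvPolynomial ℕ K)) : Prop :=
  (∀ j, Set.BijOn (π j) (Set.Icc 1 N) (Set.Icc 1 N)) ∧
  (∀ ℓ : Fin (r * N), ∀ i j, ∃ a b : K,
      M ℓ i j = C a + C b *
        X (π ⟨ℓ.val / N, Nat.div_lt_of_lt_mul (by rw [Nat.mul_comm N r]; exact ℓ.2)⟩
            (ℓ.val % N + 1))) ∧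
  (∀ (idx : Fin (r * N + 1) → Fin w) (v : ℕ) (ℓ₁ ℓ₂ : Fin (r * N)),
      v ∈ (M ℓ₁ (idx ℓ₁.castSucc) (idx ℓ₁.succ)).vars →
      v ∈ (M ℓ₂ (idx ℓ₂.castSucc) (idx ℓ₂.succ)).vars → ℓ₁ = ℓ₂)

/-- An α-sparse ROABP with variable blocks `Xs 0, …, Xs (d-1)`, width `w` and
sparsity `t`: every entry of the `i`-th matrix is a multilinear polynomial in the
variables `Xs i` with at most `t` monomials. -/
def IsSparseROABP {K : Type*} [CommSemiring K] {d : ℕ} (w t : ℕ)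
    (Xs : Fin d → Finset ℕ) (M : Fin d → Matrix (Fin w) (Fin w) (MvPolynomial ℕ K)) : Prop :=
  ∀ ℓ i j, MLin (M ℓ i j) ∧ (M ℓ i j).vars ⊆ Xs ℓ ∧ (M ℓ i j).support.card ≤ t

/-!
A syntactically multilinear program reads a variable only in adjacent layers: two reads further
apart would lie on a common path. An `r`-pass program is therefore read-once, whatever `r` is.

For a partition of the variables into two halves, let the communication matrix of a polynomial have
as entries its values at the indicator vectors of sets of variables, rows and columns being indexed
by the subsets of either half. For `g` this matrix has full rank `2 ^ (N / 2)`: the recursion for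
`g` contains a term that splits a balanced interval into shorter balanced intervals, and the weights
can be specialized so that this term determines the rank.

Cut a read-once program of width `s` into `k` blocks of `16 k²` variables. A random set of variables
unbalances each block by at least `2 k` with probability at least `1 / 2`, independently of the
others, and it has size `N / 2` with probability at least `1 / N`. So unless `m N ≥ 2 ^ k`, some
partition into two halves unbalances a block of each of the `m` programs. Factoring a program along
such a block bounds the rank of its matrix by `s² 2 ^ (N / 2 - 2 k)`, and summing gives
`m s² ≥ 2 ^ (2 k)`. Here `k` can be taken of order `N ^ (1 / 3)`.
-/

section CommunicationMatrix

universe u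

variable {α : Type u} [DecidableEq α] {R : Type*} [CommRing R] {A I I₁ I₂ : Finset α}
  {h h₁ h₂ : Finset α → R} {d d₁ d₂ : ℕ}

/-- The communication matrix of a set function `h` on `I`, with rows indexed by the subsets of
`I ∩ A`, columns by the subsets of `I \ A` and entries `h (y ∪ z)`, has a nonzero minor of
order `d`. -/
def HasMinor (A I : Finset α) (h : Finset α → R) (d : ℕ) : Prop :=
  ∃ f g : Fin d → Finset α, (∀ i, f i ⊆ I ∩ A) ∧ (∀ j, g j ⊆ I \ A) ∧
    (Matrix.of fun i j => h (f i ∪ g j)).det ≠ 0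

/-- The communication matrix of `h` on `I` for the partition `I ∩ A`, `I \ A` factors through
at most `k` coordinates; over a field, this says that its rank is at most `k`. -/
def CommRankLE (A I : Finset α) (h : Finset α → R) (k : ℕ) : Prop :=
  ∃ (κ : Type u) (_ : Fintype κ) (p q : κ → Finset α → R), Fintype.card κ ≤ k ∧
    ∀ y ⊆ I ∩ A, ∀ z ⊆ I \ A, h (y ∪ z) = ∑ t, p t y * q t z

lemma HasMinor.congr (hm : HasMinor A I h₁ d) (hh : ∀ S ⊆ I, h₁ S = h₂ S) :
    HasMinor A I h₂ d := by
  obtain ⟨f, g, hf, hg, hdet⟩ := hm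
  refine ⟨f, g, hf, hg, ?_⟩
  have hfg (i j) : f i ∪ g j ⊆ I :=
    Finset.union_subset ((hf i).trans Finset.inter_subset_left)
      ((hg j).trans Finset.sdiff_subset)
  simpa only [hh _ (hfg _ _)] using hdet

lemma hasMinor_empty [Nontrivial R] (hh : h ∅ ≠ 0) : HasMinor A ∅ h 1 :=
  ⟨fun _ => ∅, fun _ => ∅, by simp, by simp, by simpa using hh⟩

lemma hasMinor_pair [Nontrivial R] {i j : α} (hij : i ≠ j) (hA : i ∈ A ↔ j ∉ A) :
    HasMinor A {i, j} (fun S => if i ∈ S ∧ j ∈ S then (2 : R) else 1) 2 := by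
  wlog hi : i ∈ A generalizing i j
  · have := this hij.symm (by tauto) (by tauto)
    simpa only [Finset.pair_comm j i, and_comm] using this
  have hj : j ∉ A := hA.1 hi
  refine ⟨![∅, {i}], ![∅, {j}], ?_, ?_, ?_⟩
  · simp [Fin.forall_fin_two, hi]
  · simp [Fin.forall_fin_two, hj]
  · norm_num [Matrix.det_fin_two, hij, hij.symm]

lemma HasMinor.of_map {R' : Type*} [CommRing R'] (φ : R →+* R')
    (hm : HasMinor A I (fun S => φ (h S)) d) : HasMinor A I h d := by
  obtain ⟨f, g, hf, hg, hdet⟩ := hm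
  refine ⟨f, g, hf, hg, fun h0 => hdet ?_⟩
  rw [← map_zero φ, ← h0, RingHom.map_det]
  rfl

lemma HasMinor.map {R' : Type*} [CommRing R'] (hm : HasMinor A I h d) {φ : R →+* R'}
    (hφ : Function.Injective φ) : HasMinor A I (fun S => φ (h S)) d := by
  obtain ⟨f, g, hf, hg, hdet⟩ := hm
  refine ⟨f, g, hf, hg, fun h0 => hdet (hφ ?_)⟩
  rw [RingHom.map_det, map_zero]
  exact h0

lemma union_inter_eq_left_of_disjoint {S₁ S₂ : Finset α} (hI : Disjoint I₁ I₂) (h₁ : S₁ ⊆ I₁)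
    (h₂ : S₂ ⊆ I₂) : (S₁ ∪ S₂) ∩ I₁ = S₁ := by
  rw [Finset.union_inter_distrib_right, Finset.inter_eq_left.2 h₁,
    Finset.disjoint_iff_inter_eq_empty.1 (hI.symm.mono_left h₂), Finset.union_empty]

lemma HasMinor.mul [IsDomain R] (hI : Disjoint I₁ I₂) (hm₁ : HasMinor A I₁ h₁ d₁)
    (hm₂ : HasMinor A I₂ h₂ d₂) :
    HasMinor A (I₁ ∪ I₂) (fun S => h₁ (S ∩ I₁) * h₂ (S ∩ I₂)) (d₁ * d₂) := by
  obtain ⟨f₁, g₁, hf₁, hg₁, hdet₁⟩ := hm₁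
  obtain ⟨f₂, g₂, hf₂, hg₂, hdet₂⟩ := hm₂
  let e : Fin (d₁ * d₂) ≃ Fin d₁ × Fin d₂ := finProdFinEquiv.symm
  refine ⟨fun i => f₁ (e i).1 ∪ f₂ (e i).2, fun j => g₁ (e j).1 ∪ g₂ (e j).2, fun i => ?_,
    fun j => ?_, ?_⟩
  · rw [Finset.union_inter_distrib_right]
    exact Finset.union_subset_union (hf₁ _) (hf₂ _)
  · rw [Finset.union_sdiff_distrib]
    exact Finset.union_subset_union (hg₁ _) (hg₂ _)
  · have hfg₁ (i j) : f₁ i ∪ g₁ j ⊆ I₁ := Finset.union_subset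
      ((hf₁ i).trans Finset.inter_subset_left) ((hg₁ j).trans Finset.sdiff_subset)
    have hfg₂ (i j) : f₂ i ∪ g₂ j ⊆ I₂ := Finset.union_subset
      ((hf₂ i).trans Finset.inter_subset_left) ((hg₂ j).trans Finset.sdiff_subset)
    have hkron : (Matrix.of fun i j => h₁ ((f₁ (e i).1 ∪ f₂ (e i).2 ∪ (g₁ (e j).1 ∪ g₂ (e j).2)) ∩
          I₁) * h₂ ((f₁ (e i).1 ∪ f₂ (e i).2 ∪ (g₁ (e j).1 ∪ g₂ (e j).2)) ∩ I₂)) =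
        (Matrix.kroneckerMap (· * ·) (Matrix.of fun i j => h₁ (f₁ i ∪ g₁ j))
          (Matrix.of fun i j => h₂ (f₂ i ∪ g₂ j))).submatrix e e := by
      ext i j
      rw [Matrix.of_apply, Finset.union_union_union_comm,
        union_inter_eq_left_of_disjoint hI (hfg₁ _ _) (hfg₂ _ _), Finset.union_comm (f₁ _ ∪ _),
        union_inter_eq_left_of_disjoint hI.symm (hfg₂ _ _) (hfg₁ _ _)]
      rfl
    rw [hkron, Matrix.det_submatrix_equiv_self, Matrix.det_kronecker]
    exact mul_ne_zero (pow_ne_zero _ hdet₁) (pow_ne_zero _ hdet₂)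

-- The minor of `h₀ + t h₁` is a polynomial in `t`, and its coefficient of `t ^ d` is the minor of
-- `h₁`.
lemma HasMinor.exists_add_mul [IsDomain R] [Infinite R] (h₀ : Finset α → R)
    (hm : HasMinor A I h₁ d) : ∃ t : R, HasMinor A I (fun S => h₀ S + t * h₁ S) d := by
  obtain ⟨f, g, hf, hg, hdet⟩ := hm
  by_contra! hzero
  let B₁ : Matrix (Fin d) (Fin d) R := Matrix.of fun i j => h₁ (f i ∪ g j)
  let B₀ : Matrix (Fin d) (Fin d) R := Matrix.of fun i j => h₀ (f i ∪ g j)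
  let P : Polynomial R := ((Polynomial.X : Polynomial R) • B₁.map Polynomial.C
    + B₀.map Polynomial.C).det
  have hroot (t : R) : P.IsRoot t := by
    have hdet₀ : (Matrix.of fun i j => h₀ (f i ∪ g j) + t * h₁ (f i ∪ g j)).det = 0 := by
      by_contra hne
      exact hzero t ⟨f, g, hf, hg, hne⟩
    rw [Polynomial.IsRoot, ← hdet₀, ← Polynomial.coe_evalRingHom, RingHom.map_det]
    congr 1
    ext i j
    simp [B₀, B₁, add_comm, mul_comm t]
  have hP : P = 0 := Polynomial.eq_zero_of_infinite_isRoot P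
    (Set.infinite_univ.mono fun t _ => hroot t)
  refine hdet ?_
  calc B₁.det = P.coeff (Fintype.card (Fin d)) := (Polynomial.coeff_det_X_add_C_card B₁ B₀).symm
    _ = 0 := by rw [hP, Polynomial.coeff_zero]

lemma CommRankLE.mono {k l : ℕ} (hr : CommRankLE A I h k) (hkl : k ≤ l) :
    CommRankLE A I h l := by
  obtain ⟨κ, _, p, q, hcard, hfac⟩ := hr
  exact ⟨κ, _, p, q, hcard.trans hkl, hfac⟩

lemma CommRankLE.congr {k : ℕ} (hr : CommRankLE A I h₁ k) (hh : ∀ S ⊆ I, h₁ S = h₂ S) :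
    CommRankLE A I h₂ k := by
  obtain ⟨κ, _, p, q, hcard, hfac⟩ := hr
  refine ⟨κ, _, p, q, hcard, fun y hy z hz => ?_⟩
  rw [← hh _ (Finset.union_subset (hy.trans Finset.inter_subset_left)
    (hz.trans Finset.sdiff_subset)), hfac y hy z hz]

lemma commRankLE_two_pow_inter (A I : Finset α) (h : Finset α → R) :
    CommRankLE A I h (2 ^ (I ∩ A).card) := by
  refine ⟨(I ∩ A).powerset, inferInstance, fun t y => if y = t then 1 else 0,
    fun t z => h (t ∪ z),
    by rw [Fintype.card_coe, Finset.card_powerset], fun y hy z _ => ?_⟩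
  rw [Finset.sum_eq_single ⟨y, Finset.mem_powerset.2 hy⟩]
  · simp
  · rintro t - ht
    exact mul_eq_zero_of_left (if_neg fun hyt => ht (Subtype.ext hyt.symm)) _
  · simp

lemma commRankLE_two_pow_sdiff (A I : Finset α) (h : Finset α → R) :
    CommRankLE A I h (2 ^ (I \ A).card) := by
  refine ⟨(I \ A).powerset, inferInstance, fun t y => h (y ∪ t),
    fun t z => if z = t then 1 else 0,
    by rw [Fintype.card_coe, Finset.card_powerset], fun y _ z hz => ?_⟩
  rw [Finset.sum_eq_single ⟨z, Finset.mem_powerset.2 hz⟩]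
  · simp
  · rintro t - ht
    exact mul_eq_zero_of_right _ (if_neg fun hzt => ht (Subtype.ext hzt.symm))
  · simp

lemma commRankLE_two_pow_min (A I : Finset α) (h : Finset α → R) :
    CommRankLE A I h (2 ^ min (I ∩ A).card (I \ A).card) := by
  rcases min_choice (I ∩ A).card (I \ A).card with hmin | hmin <;> rw [hmin]
  exacts [commRankLE_two_pow_inter A I h, commRankLE_two_pow_sdiff A I h]

lemma CommRankLE.mul {k₁ k₂ : ℕ} (hr₁ : CommRankLE A I₁ h₁ k₁)
    (hr₂ : CommRankLE A I₂ h₂ k₂) :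
    CommRankLE A (I₁ ∪ I₂) (fun S => h₁ (S ∩ I₁) * h₂ (S ∩ I₂)) (k₁ * k₂) := by
  obtain ⟨κ₁, _, p₁, q₁, hcard₁, hfac₁⟩ := hr₁
  obtain ⟨κ₂, _, p₂, q₂, hcard₂, hfac₂⟩ := hr₂
  refine ⟨κ₁ × κ₂, inferInstance, fun t y => p₁ t.1 (y ∩ I₁) * p₂ t.2 (y ∩ I₂),
    fun t z => q₁ t.1 (z ∩ I₁) * q₂ t.2 (z ∩ I₂), ?_, fun y hy z hz => ?_⟩
  · rw [Fintype.card_prod]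
    exact Nat.mul_le_mul hcard₁ hcard₂
  · have hyA (J : Finset α) : y ∩ J ⊆ J ∩ A := fun x hx => by
      have := hy (Finset.mem_of_mem_inter_left hx)
      simp_all
    have hzA (J : Finset α) : z ∩ J ⊆ J \ A := fun x hx => by
      have := hz (Finset.mem_of_mem_inter_left hx)
      simp_all
    simp only [Finset.union_inter_distrib_right, hfac₁ _ (hyA _) _ (hzA _),
      hfac₂ _ (hyA _) _ (hzA _), Fintype.sum_mul_sum, Fintype.sum_prod_type]
    exact Finset.sum_congr rfl fun _ _ => Finset.sum_congr rfl fun _ _ => by ring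

lemma CommRankLE.sum {ι : Type} [Fintype ι] {h : ι → Finset α → R} {k : ℕ}
    (hr : ∀ i, CommRankLE A I (h i) k) :
    CommRankLE A I (fun S => ∑ i, h i S) (Fintype.card ι * k) := by
  choose κ _ p q hcard hfac using hr
  refine ⟨Σ i, κ i, inferInstance, fun t => p t.1 t.2, fun t => q t.1 t.2, ?_, fun y hy z hz => ?_⟩
  · rw [Fintype.card_sigma, ← smul_eq_mul]
    exact Finset.sum_le_card_nsmul _ _ _ fun i _ => hcard i
  · simp only [hfac _ y hy z hz, Fintype.sum_sigma]

lemma HasMinor.le_of_commRankLE {K : Type*} [Field K] {h : Finset α → K} {k : ℕ}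
    (hm : HasMinor A I h d) (hr : CommRankLE A I h k) : d ≤ k := by
  obtain ⟨f, g, hf, hg, hdet⟩ := hm
  obtain ⟨κ, _, p, q, hcard, hfac⟩ := hr
  have hprod : (Matrix.of fun i j => h (f i ∪ g j)) =
      (Matrix.of fun i t => p t (f i)) * Matrix.of fun t j => q t (g j) := by
    ext i j
    exact hfac _ (hf i) _ (hg j)
  calc d = (Matrix.of fun i j => h (f i ∪ g j)).rank := by
        rw [Matrix.rank_of_isUnit _ ((Matrix.isUnit_iff_isUnit_det _).2 hdet.isUnit),
          Fintype.card_fin]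
    _ ≤ (Matrix.of fun i t => p t (f i)).rank := hprod ▸ Matrix.rank_mul_le_left _ _
    _ ≤ Fintype.card κ := Matrix.rank_le_card_width _
    _ ≤ k := hcard

end CommunicationMatrix

section Discrepancy

variable {α : Type*} [DecidableEq α]

/-- The excess `|B ∩ A| - |B \ A|` of a set `B` with respect to the partition into `A` and its
complement. -/
def discrepancy (A B : Finset α) : ℤ := ∑ x ∈ B, if x ∈ A then 1 else -1

lemma discrepancy_union (A : Finset α) {B C : Finset α} (h : Disjoint B C) :
    discrepancy A (B ∪ C) = discrepancy A B + discrepancy A C :=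
  Finset.sum_union h

lemma discrepancy_pair_eq_zero {A : Finset α} {i j : α} (hij : i ≠ j) (hA : i ∈ A ↔ j ∉ A) :
    discrepancy A {i, j} = 0 := by
  rw [discrepancy, Finset.sum_pair hij]
  by_cases hi : i ∈ A <;> simp_all

lemma discrepancy_eq_card_sub_card (A B : Finset α) :
    discrepancy A B = (B ∩ A).card - (B \ A).card := by
  rw [discrepancy, Finset.sum_ite, Finset.filter_mem_eq_inter, Finset.filter_notMem_eq_sdiff]
  simp [sub_eq_add_neg]

lemma two_mul_card_inter (A B : Finset α) : (2 * (B ∩ A).card : ℤ) = B.card + discrepancy A B := by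
  rw [discrepancy_eq_card_sub_card, ← Finset.card_inter_add_card_sdiff B A]
  push_cast
  ring

lemma two_mul_card_sdiff (A B : Finset α) : (2 * (B \ A).card : ℤ) = B.card - discrepancy A B := by
  rw [discrepancy_eq_card_sub_card, ← Finset.card_inter_add_card_sdiff B A]
  push_cast
  ring

lemma two_mul_min_card (A B : Finset α) :
    (2 * min (B ∩ A).card (B \ A).card : ℤ) = B.card - |discrepancy A B| := by
  have hinter := two_mul_card_inter A B
  have hsdiff := two_mul_card_sdiff A B
  obtain ⟨h, _⟩ | ⟨h, _⟩ := abs_cases (discrepancy A B) <;> omega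

end Discrepancy

section RazYehudayoff

variable {R : Type*} [CommRing R]

/-- The value at the indicator vector of `S` of the Raz–Yehudayoff polynomial of the interval
`[i, i + 2ℓ - 1]`, for arbitrary weights. Intervals are encoded by start and half-length, so
`u ℓ i p` stands for `w_{i,k,j}` with `k = i + 2p + 1` and `j = i + 2ℓ + 1`. -/
def ryValue (u : ℕ → ℕ → ℕ → R) : ℕ → ℕ → Finset ℕ → R
  | 0, _, _ => 1
  | ℓ + 1, i, S =>
      (if i ∈ S ∧ i + 2 * ℓ + 1 ∈ S then 2 else 1) * ryValue u ℓ (i + 1) S +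
        ∑ p : Fin ℓ, u ℓ i p *
          (ryValue u (p + 1) i S * ryValue u (ℓ - p) (i + 2 * (p + 1)) S)

lemma map_ryValue {R' : Type*} [CommRing R'] (φ : R →+* R') (u : ℕ → ℕ → ℕ → R) (ℓ i : ℕ)
    (S : Finset ℕ) : φ (ryValue u ℓ i S) = ryValue (fun ℓ i p => φ (u ℓ i p)) ℓ i S := by
  induction ℓ using Nat.strong_induction_on generalizing i with
  | _ ℓ ih =>
    rcases ℓ with _ | ℓ
    · rw [ryValue, ryValue, map_one]
    · rw [ryValue, ryValue, map_add, map_mul, map_sum, apply_ite φ, map_ofNat, map_one,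
        ih ℓ ℓ.lt_succ_self]
      congr 1
      exact Finset.sum_congr rfl fun p _ => by
        rw [map_mul, map_mul, ih _ (by omega), ih _ (by omega)]

lemma ryValue_congr {u u' : ℕ → ℕ → ℕ → R} {n : ℕ} (hu : ∀ ℓ < n, u ℓ = u' ℓ) {ℓ : ℕ}
    (hℓ : ℓ ≤ n) (i : ℕ) : ryValue u ℓ i = ryValue u' ℓ i := by
  induction ℓ using Nat.strong_induction_on generalizing i with
  | _ ℓ ih =>
    rcases ℓ with _ | ℓ
    · funext S
      rw [ryValue, ryValue]
    · funext S
      rw [ryValue, ryValue, hu ℓ hℓ, ih ℓ ℓ.lt_succ_self (by omega)]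
      congr 1
      exact Finset.sum_congr rfl fun p _ => by
        rw [ih _ (by omega) (by omega), ih _ (by omega) (by omega)]

lemma ryValue_inter (u : ℕ → ℕ → ℕ → R) {ℓ i : ℕ} {J : Finset ℕ}
    (hJ : Finset.Ico i (i + 2 * ℓ) ⊆ J) (S : Finset ℕ) :
    ryValue u ℓ i (S ∩ J) = ryValue u ℓ i S := by
  induction ℓ using Nat.strong_induction_on generalizing i with
  | _ ℓ ih =>
    rcases ℓ with _ | ℓ
    · rw [ryValue, ryValue]
    · have hsub (i' ℓ') (hi : i ≤ i') (hℓ : i' + 2 * ℓ' ≤ i + 2 * (ℓ + 1)) :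
          Finset.Ico i' (i' + 2 * ℓ') ⊆ J := (Finset.Ico_subset_Ico hi hℓ).trans hJ
      have hmem (x) (hx : i ≤ x) (hx' : x < i + 2 * (ℓ + 1)) : x ∈ S ∩ J ↔ x ∈ S := by
        simp [hJ (Finset.mem_Ico.2 ⟨hx, hx'⟩)]
      rw [ryValue, ryValue]
      simp only [hmem i le_rfl (by omega), hmem (i + 2 * ℓ + 1) (by omega) (by omega)]
      rw [ih ℓ ℓ.lt_succ_self (hsub _ _ (by omega) (by omega))]
      congr 1
      exact Finset.sum_congr rfl fun p _ => by
        rw [ih _ (by omega) (hsub _ _ le_rfl (by omega)),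
          ih _ (by omega) (hsub _ _ (by omega) (by omega))]

/-- The substitution of the indicator vector of `S`. -/
def evalIndicator {K : Type*} [CommSemiring K] {σ : Type*} [DecidableEq σ] (S : Finset σ) :
    MvPolynomial σ K →+* K :=
  MvPolynomial.eval fun x => if x ∈ S then 1 else 0

lemma evalIndicator_RY (F : Type*) [Field F] (S : Finset ℕ) {fuel ℓ i : ℕ} (hi : 1 ≤ i)
    (hℓ : ℓ ≤ fuel) : evalIndicator S (RY F fuel i (i + 2 * ℓ - 1)) =
      ryValue (fun ℓ i p => wv F i (i + 2 * p + 1) (i + 2 * ℓ + 1)) ℓ i S := by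
  induction fuel generalizing ℓ i with
  | zero =>
    obtain rfl : ℓ = 0 := by omega
    rw [RY, ryValue, map_one]
  | succ fuel ih =>
    rcases ℓ with _ | ℓ
    · rw [RY, ryValue, if_pos (by omega), map_one]
    · rw [RY, ryValue, if_neg (by omega), map_add, map_mul, map_sum,
        show i + 2 * (ℓ + 1) - 1 - 1 = i + 1 + 2 * ℓ - 1 by omega,
        show i + 2 * (ℓ + 1) - 1 = i + 2 * ℓ + 1 by omega, ih (by omega) (by omega)]
      congr 1
      · congr 1
        by_cases h₁ : i ∈ S <;> by_cases h₂ : i + 2 * ℓ + 1 ∈ S <;>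
          simp [evalIndicator, h₁, h₂, one_add_one_eq_two]
      · symm
        refine Finset.sum_bij (fun p _ => i + 2 * p.1 + 1) (fun p _ => ?_) (fun p _ q _ h => ?_)
          (fun k hk => ?_) fun p _ => ?_
        · have := p.2
          simp only [Finset.mem_filter, Finset.mem_Icc]
          omega
        · exact Fin.ext (by omega)
        · simp only [Finset.mem_filter, Finset.mem_Icc] at hk
          exact ⟨⟨(k - i - 1) / 2, by omega⟩, Finset.mem_univ _, by dsimp only; omega⟩
        · have hleft := ih hi (show p.1 + 1 ≤ fuel by omega)
          have hright := ih (show 1 ≤ i + 2 * (p.1 + 1) by omega) (show ℓ - p ≤ fuel by omega)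
          rw [show i + 2 * (p.1 + 1) - 1 = i + 2 * p + 1 by omega] at hleft
          rw [show i + 2 * (p.1 + 1) + 2 * (ℓ - p) - 1 = i + 2 * ℓ + 1 by omega] at hright
          rw [map_mul, map_mul, hleft, show i + 2 * p.1 + 1 + 1 = i + 2 * (p.1 + 1) by omega,
            hright, mul_assoc, evalIndicator, MvPolynomial.eval_C]

lemma Ico_eq_pair_union (i n : ℕ) : Finset.Ico i (i + 2 * (n + 1)) =
    {i, i + 2 * n + 1} ∪ Finset.Ico (i + 1) (i + 1 + 2 * n) := by
  ext x
  simp only [Finset.mem_Ico, Finset.mem_union, Finset.mem_insert, Finset.mem_singleton]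
  omega

lemma disjoint_pair_Ico (i n : ℕ) :
    Disjoint {i, i + 2 * n + 1} (Finset.Ico (i + 1) (i + 1 + 2 * n)) := by
  rw [Finset.disjoint_left]
  intro x
  simp only [Finset.mem_Ico, Finset.mem_insert, Finset.mem_singleton]
  omega

lemma exists_eq_zero_of_no_jump {d : ℕ → ℤ} (hd : ∀ p, 0 < d p → 0 ≤ d (p + 1)) {a b : ℕ}
    (hab : a ≤ b) (ha : 0 ≤ d a) (hb : d b ≤ 0) : ∃ p, a ≤ p ∧ p ≤ b ∧ d p = 0 := by
  induction b, hab using Nat.le_induction with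
  | base => exact ⟨a, le_rfl, le_rfl, le_antisymm hb ha⟩
  | succ b hab ih =>
    rcases le_or_gt (d b) 0 with hdb | hdb
    · obtain ⟨p, hap, hpb, hp⟩ := ih hdb
      exact ⟨p, hap, hpb.trans b.le_succ, hp⟩
    · exact ⟨b + 1, hab.trans b.le_succ, le_rfl, le_antisymm hb (hd b hdb)⟩

-- The discrepancies of the prefixes of even length start and end at `0`, and they leave and
-- reach it on opposite sides when the endpoints agree, so they vanish in between.
lemma exists_balanced_split {A : Finset ℕ} {i n : ℕ}
    (hbal : discrepancy A (Finset.Ico i (i + 2 * (n + 1))) = 0)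
    (hends : i ∈ A ↔ i + 2 * n + 1 ∈ A) :
    ∃ p : Fin n, discrepancy A (Finset.Ico i (i + 2 * (p + 1))) = 0 := by
  let d : ℕ → ℤ := fun p => discrepancy A (Finset.Ico i (i + 2 * p))
  let ε : ℕ → ℤ := fun x => if x ∈ A then 1 else -1
  have hε (x) : ε x = 1 ∨ ε x = -1 := by by_cases hx : x ∈ A <;> simp [ε, hx]
  have hstep (p) : d (p + 1) = d p + ε (i + 2 * p) + ε (i + 2 * p + 1) := by
    simp only [d, discrepancy, show i + 2 * (p + 1) = i + 2 * p + 1 + 1 by ring]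
    rw [Finset.sum_Ico_succ_top (by omega), Finset.sum_Ico_succ_top (by omega)]
  have heven (p) : ∃ e, d p = 2 * e := by
    have := two_mul_card_inter A (Finset.Ico i (i + 2 * p))
    rw [Nat.card_Ico] at this
    exact ⟨(Finset.Ico i (i + 2 * p) ∩ A).card - p, by simp only [d]; omega⟩
  have hjump (p) : (0 < d p → 0 ≤ d (p + 1)) ∧ (0 < -d p → 0 ≤ -d (p + 1)) := by
    have := hstep p
    obtain ⟨e, he⟩ := heven p
    rcases hε (i + 2 * p) with h | h <;> rcases hε (i + 2 * p + 1) with h' | h' <;> omega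
  have hfirst : d 1 = ε i + ε (i + 1) := by simpa [d, discrepancy] using hstep 0
  have hlast : d n + ε (i + 2 * n) + ε (i + 2 * n + 1) = 0 := (hstep n).symm.trans hbal
  have hεends : ε i = ε (i + 2 * n + 1) := by simp only [ε, hends]
  have hn : 1 ≤ n := by
    by_contra! hn
    obtain rfl : n = 0 := by omega
    have := (hfirst.symm.trans hbal)
    simp only [mul_zero, add_zero] at hεends
    rcases hε i with h | h <;> omega
  obtain ⟨p, hp, hpn, hzero⟩ : ∃ p, 1 ≤ p ∧ p ≤ n ∧ d p = 0 := by
    have hnext := hε (i + 1)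
    have hprev := hε (i + 2 * n)
    rcases hε i with h | h
    · exact exists_eq_zero_of_no_jump (fun p => (hjump p).1) hn (by omega) (by omega)
    · simpa only [neg_eq_zero] using exists_eq_zero_of_no_jump (d := fun p => -d p)
        (fun p => (hjump p).2) hn (by omega) (by omega)
  refine ⟨⟨p - 1, by omega⟩, ?_⟩
  rwa [show p - 1 + 1 = p by omega]

lemma HasMinor.ryValue_of_endpoints [IsDomain R] {A : Finset ℕ} {u : ℕ → ℕ → ℕ → R} {n i : ℕ}
    (hends : i ∈ A ↔ i + 2 * n + 1 ∉ A)
    (hm : HasMinor A (Finset.Ico (i + 1) (i + 1 + 2 * n)) (ryValue u n (i + 1)) (2 ^ n)) :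
    HasMinor A (Finset.Ico i (i + 2 * (n + 1)))
      (fun S => (if i ∈ S ∧ i + 2 * n + 1 ∈ S then 2 else 1) * ryValue u n (i + 1) S)
      (2 ^ (n + 1)) := by
  have hunion := Ico_eq_pair_union i n
  have hpair := hasMinor_pair (R := R) (show i ≠ i + 2 * n + 1 by omega) hends
  rw [hunion, pow_succ']
  refine (hpair.mul (disjoint_pair_Ico i n) hm).congr fun S _ => ?_
  rw [ryValue_inter u subset_rfl]
  simp

lemma HasMinor.ryValue_mul [IsDomain R] {A : Finset ℕ} {u : ℕ → ℕ → ℕ → R} {ℓ₁ ℓ₂ i : ℕ}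
    (hm₁ : HasMinor A (Finset.Ico i (i + 2 * ℓ₁)) (ryValue u ℓ₁ i) (2 ^ ℓ₁))
    (hm₂ : HasMinor A (Finset.Ico (i + 2 * ℓ₁) (i + 2 * ℓ₁ + 2 * ℓ₂))
      (ryValue u ℓ₂ (i + 2 * ℓ₁)) (2 ^ ℓ₂)) :
    HasMinor A (Finset.Ico i (i + 2 * (ℓ₁ + ℓ₂)))
      (fun S => ryValue u ℓ₁ i S * ryValue u ℓ₂ (i + 2 * ℓ₁) S) (2 ^ (ℓ₁ + ℓ₂)) := by
  rw [mul_add, ← add_assoc, ← Finset.Ico_union_Ico_eq_Ico (show i ≤ i + 2 * ℓ₁ by omega)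
    (show i + 2 * ℓ₁ ≤ i + 2 * ℓ₁ + 2 * ℓ₂ by omega), pow_add]
  refine (hm₁.mul (Finset.Ico_disjoint_Ico_consecutive _ _ _) hm₂).congr fun S _ => ?_
  rw [ryValue_inter u subset_rfl, ryValue_inter u subset_rfl]

variable {K : Type*} [Field K] [Infinite K]

lemma exists_top_weights {A : Finset ℕ} {u : ℕ → ℕ → ℕ → K} {n i : ℕ}
    (ih : ∀ ℓ ≤ n, ∀ i, discrepancy A (Finset.Ico i (i + 2 * ℓ)) = 0 →
      HasMinor A (Finset.Ico i (i + 2 * ℓ)) (ryValue u ℓ i) (2 ^ ℓ))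
    (hbal : discrepancy A (Finset.Ico i (i + 2 * (n + 1))) = 0) :
    ∃ v : ℕ → K, HasMinor A (Finset.Ico i (i + 2 * (n + 1)))
      (fun S => (if i ∈ S ∧ i + 2 * n + 1 ∈ S then 2 else 1) * ryValue u n (i + 1) S +
        ∑ p : Fin n, v p * (ryValue u (p + 1) i S * ryValue u (n - p) (i + 2 * (p + 1)) S))
      (2 ^ (n + 1)) := by
  by_cases hends : i ∈ A ↔ i + 2 * n + 1 ∈ A
  · obtain ⟨p, hp⟩ := exists_balanced_split hbal hends
    have hlen : p + 1 + (n - p) = n + 1 := by omega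
    have hp' :
        discrepancy A (Finset.Ico (i + 2 * (p + 1)) (i + 2 * (p + 1) + 2 * (n - p))) = 0 := by
      rw [← hlen, mul_add, ← add_assoc, ← Finset.Ico_union_Ico_eq_Ico
        (show i ≤ i + 2 * (p + 1) by omega) (Nat.le_add_right _ _),
        discrepancy_union A (Finset.Ico_disjoint_Ico_consecutive _ _ _), hp, zero_add] at hbal
      exact hbal
    have hm := (ih _ (by omega) _ hp).ryValue_mul (ih _ (by omega) _ hp')
    rw [hlen] at hm
    obtain ⟨t, ht⟩ := hm.exists_add_mul fun S =>
      (if i ∈ S ∧ i + 2 * n + 1 ∈ S then 2 else 1) * ryValue u n (i + 1) S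
    refine ⟨Pi.single p t, ht.congr fun S _ => ?_⟩
    rw [Finset.sum_eq_single p, Pi.single_eq_same]
    · intro q _ hq
      rw [Pi.single_eq_of_ne (Fin.val_ne_of_ne hq), zero_mul]
    · simp
  · have hends' : i ∈ A ↔ i + 2 * n + 1 ∉ A := by tauto
    have hinner : discrepancy A (Finset.Ico (i + 1) (i + 1 + 2 * n)) = 0 := by
      rwa [Ico_eq_pair_union, discrepancy_union A (disjoint_pair_Ico i n),
        discrepancy_pair_eq_zero (by omega) hends', zero_add] at hbal
    refine ⟨0, ((ih n le_rfl _ hinner).ryValue_of_endpoints hends').congr fun S _ => ?_⟩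
    simp

-- Weights of intervals of half-length `ℓ + 1` do not occur in the polynomials of shorter
-- intervals, so they can be chosen one length at a time.
lemma exists_weights_hasMinor (K : Type*) [Field K] [Infinite K] (A : Finset ℕ) (n : ℕ) :
    ∃ u : ℕ → ℕ → ℕ → K, ∀ ℓ ≤ n, ∀ i, discrepancy A (Finset.Ico i (i + 2 * ℓ)) = 0 →
      HasMinor A (Finset.Ico i (i + 2 * ℓ)) (ryValue u ℓ i) (2 ^ ℓ) := by
  induction n with
  | zero =>
    refine ⟨0, fun ℓ hℓ i _ => ?_⟩
    obtain rfl : ℓ = 0 := by omega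
    simpa using hasMinor_empty (by simp [ryValue])
  | succ n ih =>
    obtain ⟨u, hu⟩ := ih
    have hv (i) : ∃ v : ℕ → K, discrepancy A (Finset.Ico i (i + 2 * (n + 1))) = 0 →
        HasMinor A (Finset.Ico i (i + 2 * (n + 1)))
          (fun S => (if i ∈ S ∧ i + 2 * n + 1 ∈ S then 2 else 1) * ryValue u n (i + 1) S +
            ∑ p : Fin n, v p * (ryValue u (p + 1) i S * ryValue u (n - p) (i + 2 * (p + 1)) S))
          (2 ^ (n + 1)) := by
      by_cases hbal : discrepancy A (Finset.Ico i (i + 2 * (n + 1))) = 0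
      · exact (exists_top_weights hu hbal).imp fun v hv _ => hv
      · exact ⟨0, fun h => absurd h hbal⟩
    choose v hv using hv
    have hlow {ℓ} (hℓ : ℓ ≤ n) (i) : ryValue (Function.update u n v) ℓ i = ryValue u ℓ i :=
      ryValue_congr (fun m hm => Function.update_of_ne hm.ne v u) hℓ i
    refine ⟨Function.update u n v, fun ℓ hℓ i hbal => ?_⟩
    rcases hℓ.lt_or_eq with hℓ | rfl
    · rw [hlow (by omega)]
      exact hu ℓ (by omega) i hbal
    · refine (hv i hbal).congr fun S _ => ?_
      rw [ryValue, hlow le_rfl, Function.update_self]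
      congr 1
      exact Finset.sum_congr rfl fun p _ => by rw [hlow (by omega), hlow (by omega)]

theorem hasMinor_razPoly (F : Type*) [Field F] {A : Finset ℕ} {n : ℕ}
    (hbal : discrepancy A (Finset.Icc 1 (2 * n)) = 0) :
    HasMinor A (Finset.Icc 1 (2 * n)) (fun S => evalIndicator S (razPoly F (2 * n))) (2 ^ n) := by
  have hIcc : Finset.Icc 1 (2 * n) = Finset.Ico 1 (1 + 2 * n) := by
    ext x
    simp only [Finset.mem_Icc, Finset.mem_Ico]
    omega
  rw [hIcc] at hbal ⊢
  obtain ⟨u, hu⟩ := exists_weights_hasMinor (AlgebraicClosure F) A n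
  let X : ℕ → ℕ → ℕ → MvPolynomial (ℕ × ℕ × ℕ) F := fun ℓ i p =>
    MvPolynomial.X (i, i + 2 * p + 1, i + 2 * ℓ + 1)
  let φ : MvPolynomial (ℕ × ℕ × ℕ) F →+* AlgebraicClosure F :=
    (MvPolynomial.aeval fun t : ℕ × ℕ × ℕ =>
      u ((t.2.2 - t.1 - 1) / 2) t.1 ((t.2.1 - t.1 - 1) / 2)).toRingHom
  have hφ : (fun ℓ i p => φ (X ℓ i p)) = u := by
    funext ℓ i p
    simp only [φ, X, AlgHom.toRingHom_eq_coe, RingHom.coe_coe, MvPolynomial.aeval_X]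
    congr 1 <;> omega
  have hgeneric : HasMinor A (Finset.Ico 1 (1 + 2 * n)) (ryValue X n 1) (2 ^ n) := by
    refine HasMinor.of_map φ ((hu n le_rfl 1 hbal).congr fun S _ => ?_)
    rw [map_ryValue, hφ]
  refine (hgeneric.map (IsFractionRing.injective _ (Gf F))).congr fun S _ => ?_
  have heval := evalIndicator_RY F S le_rfl (show n ≤ 2 * n by omega)
  rw [show 1 + 2 * n - 1 = 2 * n by omega] at heval
  rw [map_ryValue, razPoly, heval]
  rfl

end RazYehudayoff

section BranchingProgram

variable {K : Type*} [CommSemiring K] {n w : ℕ}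
  {M : Fin n → Matrix (Fin w) (Fin w) (MvPolynomial ℕ K)} {X P B S S' : Finset ℕ} {t a b c : ℕ}

/-- The layer `ℓ` of the program `M` reads the variable `v`, i.e. one of its entries depends
on `v`. Layers are numbered by `ℕ`, those from `n` on being empty. -/
def Reads (M : Fin n → Matrix (Fin w) (Fin w) (MvPolynomial ℕ K)) (ℓ v : ℕ) : Prop :=
  ∃ (h : ℓ < n) (i j : Fin w), v ∈ (M ⟨ℓ, h⟩ i j).vars

/-- A read-once program, in the sense of oblivious branching programs with consecutive layers
reading the same variable merged: between two layers reading `u`, no other variable is read. -/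
def ReadOnce (M : Fin n → Matrix (Fin w) (Fin w) (MvPolynomial ℕ K)) : Prop :=
  ∀ ⦃ℓ₁ ℓ₂ ℓ₃ u v : ℕ⦄, ℓ₁ ≤ ℓ₂ → ℓ₂ ≤ ℓ₃ → Reads M ℓ₁ u → Reads M ℓ₂ v → Reads M ℓ₃ u → u = v

/-- Cutting the program `M` before layer `t` separates the variables of `P` from those of
`X \ P`. -/
structure IsCut (M : Fin n → Matrix (Fin w) (Fin w) (MvPolynomial ℕ K)) (X P : Finset ℕ)
    (t : ℕ) : Prop where
  subset : P ⊆ X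
  le : t ≤ n
  mem_of_lt : ∀ ⦃ℓ v : ℕ⦄, ℓ < t → v ∈ X → Reads M ℓ v → v ∈ P
  notMem_of_le : ∀ ⦃ℓ v : ℕ⦄, t ≤ ℓ → Reads M ℓ v → v ∉ P

lemma IsCut.insert_of_not_reads {v : ℕ} (hP : IsCut M X P t) (hv : v ∈ X)
    (hnot : ∀ ℓ, t ≤ ℓ → ¬ Reads M ℓ v) : IsCut M X (insert v P) t where
  subset := Finset.insert_subset hv hP.subset
  le := hP.le
  mem_of_lt _ _ hℓ hu hR := Finset.mem_insert_of_mem (hP.mem_of_lt hℓ hu hR)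
  notMem_of_le ℓ u hℓ hR hu := by
    obtain rfl | hu := Finset.mem_insert.1 hu
    exacts [hnot ℓ hℓ hR, hP.notMem_of_le hℓ hR hu]

lemma ReadOnce.exists_insert_of_reads (hM : ReadOnce M) (hP : IsCut M X P t) {ℓ v : ℕ}
    (hv : v ∈ X) (hR : Reads M ℓ v) (htℓ : t ≤ ℓ)
    (hfirst : ∀ ℓ' u, u ∈ X → u ∉ P → Reads M ℓ' u → ℓ ≤ ℓ') :
    ∃ t', t ≤ t' ∧ IsCut M X (insert v P) t' := by
  classical
  set last := Nat.findGreatest (fun ℓ' => Reads M ℓ' v) n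
  have hle : ∀ ℓ', Reads M ℓ' v → ℓ' ≤ last := fun ℓ' hR' =>
    Nat.le_findGreatest (P := fun ℓ' => Reads M ℓ' v) hR'.1.le hR'
  have hlast : Reads M last v :=
    Nat.findGreatest_spec (P := fun ℓ' => Reads M ℓ' v) hR.1.le hR
  have hℓ := hle ℓ hR
  refine ⟨last + 1, by omega, Finset.insert_subset hv hP.subset, hlast.1, ?_, ?_⟩
  · intro ℓ' u hℓ' hu hRu
    by_contra huP
    rw [Finset.mem_insert, not_or] at huP
    exact huP.1 (hM (hfirst ℓ' u hu huP.2 hRu) (by omega) hR hRu hlast).symm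
  · intro ℓ' u hℓ' hRu hu
    obtain rfl | hu := Finset.mem_insert.1 hu
    · have := hle ℓ' hRu
      omega
    · exact hP.notMem_of_le (by omega) hRu hu

lemma ReadOnce.exists_insert (hM : ReadOnce M) (hP : IsCut M X P t) (hPX : P ⊂ X) :
    ∃ v ∉ P, ∃ t', t ≤ t' ∧ IsCut M X (insert v P) t' := by
  classical
  by_cases hex : ∃ ℓ, ∃ v ∈ X, v ∉ P ∧ Reads M ℓ v
  · obtain ⟨v, hv, hvP, hR⟩ := Nat.find_spec hex
    refine ⟨v, hvP, hM.exists_insert_of_reads hP hv hR ?_ fun ℓ u hu huP hRu =>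
      Nat.find_min' hex ⟨u, hu, huP, hRu⟩⟩
    by_contra hlt
    exact hvP (hP.mem_of_lt (not_le.1 hlt) hv hR)
  · obtain ⟨v, hv, hvP⟩ := Finset.exists_of_ssubset hPX
    exact ⟨v, hvP, t, le_rfl, hP.insert_of_not_reads hv fun ℓ _ hR => hex ⟨ℓ, v, hv, hvP, hR⟩⟩

lemma ReadOnce.exists_cuts (hM : ReadOnce M) (X : Finset ℕ) :
    ∃ (P : ℕ → Finset ℕ) (t : ℕ → ℕ), Monotone P ∧ Monotone t ∧
      ∀ p, IsCut M X (P p) (t p) ∧ (p ≤ X.card → (P p).card = p) := by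
  have hstep (c : {c : Finset ℕ × ℕ // IsCut M X c.1 c.2}) :
      ∃ c' : {c : Finset ℕ × ℕ // IsCut M X c.1 c.2}, c.1 ≤ c'.1 ∧
        (c.1.1.card < X.card → c'.1.1.card = c.1.1.card + 1) := by
    obtain ⟨⟨P, t⟩, hP⟩ := c
    obtain rfl | hPX := hP.subset.eq_or_ssubset
    · exact ⟨⟨(P, t), hP⟩, le_rfl, fun h => absurd h (lt_irrefl _)⟩
    · obtain ⟨v, hv, t', ht, hP'⟩ := hM.exists_insert hP hPX
      exact ⟨⟨(insert v P, t'), hP'⟩, ⟨Finset.subset_insert v P, ht⟩,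
        fun _ => Finset.card_insert_of_notMem hv⟩
  choose next hnext hcard using hstep
  have hstart : IsCut M X ∅ 0 := ⟨by simp, by simp, by simp, by simp⟩
  let cut (p : ℕ) := next^[p] ⟨(∅, 0), hstart⟩
  have hsucc (p : ℕ) : cut (p + 1) = next (cut p) := Function.iterate_succ_apply' ..
  have hmono : Monotone fun p => (cut p).1 := monotone_nat_of_le_succ fun p => by
    rw [hsucc]
    exact hnext _
  refine ⟨fun p => (cut p).1.1, fun p => (cut p).1.2, fun p q h => (hmono h).1,
    fun p q h => (hmono h).2, fun p => ⟨(cut p).2, ?_⟩⟩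
  induction p with
  | zero => exact fun _ => rfl
  | succ p ih =>
    intro hp
    have hcp := ih (by omega)
    simp only at hcp ⊢
    rw [hsucc, hcard _ (by omega), hcp]

/-- The variables of `B ⊆ X` are exactly the variables of `X` read by some group of consecutive
layers, up to variables that are not read at all. -/
def IsSegment (M : Fin n → Matrix (Fin w) (Fin w) (MvPolynomial ℕ K)) (X B : Finset ℕ) : Prop :=
  ∃ P P' t t', t ≤ t' ∧ IsCut M X P t ∧ IsCut M X P' t' ∧ B = P' \ P

lemma IsSegment.subset (hB : IsSegment M X B) : B ⊆ X := by
  obtain ⟨P, P', t, t', -, -, hP', rfl⟩ := hB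
  exact Finset.sdiff_subset.trans hP'.subset

lemma ReadOnce.exists_segments (hM : ReadOnce M) {k b : ℕ} (hk : k * b ≤ X.card) :
    ∃ B : ℕ → Finset ℕ, Pairwise (Function.onFun Disjoint B) ∧
      ∀ j < k, IsSegment M X (B j) ∧ (B j).card = b := by
  obtain ⟨P, t, hP, ht, hcut⟩ := hM.exists_cuts X
  refine ⟨fun j => P ((j + 1) * b) \ P (j * b), fun i j hij => ?_, fun j hj => ?_⟩
  · wlog hlt : i < j generalizing i j
    · exact (this j i hij.symm (by omega)).symm
    exact (Finset.disjoint_sdiff.mono_left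
      (Finset.sdiff_subset.trans (hP (Nat.mul_le_mul_right b hlt))))
  · have hjb : j * b ≤ (j + 1) * b := Nat.mul_le_mul_right b (by omega)
    have hjk : (j + 1) * b ≤ X.card := (Nat.mul_le_mul_right b hj).trans hk
    refine ⟨⟨_, _, _, _, ht hjb, (hcut _).1, (hcut _).1, rfl⟩, ?_⟩
    rw [Finset.card_sdiff_of_subset (hP hjb), (hcut _).2 hjk, (hcut _).2 (hjb.trans hjk),
      Nat.succ_mul, Nat.add_sub_cancel_left]

/-- The product of the layers `a, …, b - 1` of `M`, evaluated at the indicator vector of `S`. -/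
def layersProd (M : Fin n → Matrix (Fin w) (Fin w) (MvPolynomial ℕ K)) (S : Finset ℕ)
    (a b : ℕ) : Matrix (Fin w) (Fin w) K :=
  ((List.Ico a b).map fun ℓ => if h : ℓ < n then (M ⟨ℓ, h⟩).map (evalIndicator S) else 1).prod

lemma evalIndicator_mprodVal (hw : 0 < w) (S : Finset ℕ) :
    evalIndicator S (mprodVal hw M) = layersProd M S 0 n ⟨0, hw⟩ ⟨0, hw⟩ := by
  have hprod : (evalIndicator S).mapMatrix (List.ofFn M).prod = layersProd M S 0 n := by
    rw [layersProd, map_list_prod, List.map_ofFn, List.Ico.zero_bot,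
      ← List.map_coe_finRange_eq_range, List.map_map, List.ofFn_eq_map]
    congr 2
    ext1 ℓ
    simp
  rw [← hprod]
  rfl

lemma layersProd_mul (hab : a ≤ b) (hbc : b ≤ c) :
    layersProd M S a b * layersProd M S b c = layersProd M S a c := by
  simp only [layersProd]
  rw [← List.prod_append, ← List.map_append, List.Ico.append_consecutive hab hbc]

lemma layersProd_congr
    (h : ∀ ℓ v, a ≤ ℓ → ℓ < b → Reads M ℓ v → (v ∈ S ↔ v ∈ S')) :
    layersProd M S a b = layersProd M S' a b := by
  refine congrArg List.prod (List.map_congr_left fun ℓ hℓ => ?_)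
  rw [List.Ico.mem] at hℓ
  split_ifs with hn
  · ext i j
    refine MvPolynomial.eval₂Hom_congr' rfl (fun v hv _ => ?_) rfl
    simp only [h ℓ v hℓ.1 hℓ.2 ⟨hn, i, j, hv⟩]
  · rfl

lemma IsSegment.exists_factorization (hB : IsSegment M X B) (hw : 0 < w) :
    ∃ Q H : Fin w × Fin w → Finset ℕ → K, ∀ S ⊆ X,
      evalIndicator S (mprodVal hw M) = ∑ x, Q x (S ∩ B) * H x (S ∩ (X \ B)) := by
  obtain ⟨P, P', t, t', htt', hP, hP', rfl⟩ := hB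
  refine ⟨fun x T => layersProd M T t t' x.1 x.2, fun x T =>
    layersProd M T 0 t ⟨0, hw⟩ x.1 * layersProd M T t' n x.2 ⟨0, hw⟩, fun S hS => ?_⟩
  have hleft : layersProd M (S ∩ (X \ (P' \ P))) 0 t = layersProd M S 0 t :=
    layersProd_congr fun ℓ v _ hℓ hR => by
      have := hP.mem_of_lt (v := v) hℓ
      have := @hS v
      simp only [Finset.mem_inter, Finset.mem_sdiff]
      tauto
  have hmid : layersProd M (S ∩ (P' \ P)) t t' = layersProd M S t t' :=
    layersProd_congr fun ℓ v hℓ hℓ' hR => by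
      have := hP.notMem_of_le hℓ hR
      have := hP'.mem_of_lt (v := v) hℓ'
      have := @hS v
      simp only [Finset.mem_inter, Finset.mem_sdiff]
      tauto
  have hright : layersProd M (S ∩ (X \ (P' \ P))) t' n = layersProd M S t' n :=
    layersProd_congr fun ℓ v hℓ _ hR => by
      have := hP'.notMem_of_le hℓ hR
      have := @hS v
      simp only [Finset.mem_inter, Finset.mem_sdiff]
      tauto
  simp only [hleft, hmid, hright]
  rw [evalIndicator_mprodVal, ← layersProd_mul t.zero_le hP.le, ← layersProd_mul htt' hP'.le,
    Matrix.mul_apply, Fintype.sum_prod_type]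
  simp only [Matrix.mul_apply, Finset.mul_sum]
  exact Finset.sum_congr rfl fun x _ => Finset.sum_congr rfl fun y _ => by ring

lemma IsSegment.commRankLE {K : Type*} [CommRing K]
    {M : Fin n → Matrix (Fin w) (Fin w) (MvPolynomial ℕ K)} {A : Finset ℕ} {k₁ k₂ : ℕ}
    (hB : IsSegment M X B) (hw : 0 < w)
    (h₁ : ∀ h : Finset ℕ → K, CommRankLE A B h k₁)
    (h₂ : ∀ h : Finset ℕ → K, CommRankLE A (X \ B) h k₂) :
    CommRankLE A X (fun S => evalIndicator S (mprodVal hw M)) (w ^ 2 * (k₁ * k₂)) := by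
  obtain ⟨Q, H, hQH⟩ := hB.exists_factorization hw
  have hsum := CommRankLE.sum fun x => (h₁ (Q x)).mul (h₂ (H x))
  rw [Finset.union_sdiff_of_subset hB.subset, Fintype.card_prod, Fintype.card_fin, ← sq] at hsum
  exact hsum.congr fun S hS => (hQH S hS).symm

end BranchingProgram

section MultiPass

variable {K : Type*} [CommSemiring K] {N w r : ℕ} {π : Fin r → ℕ → ℕ}
  {M : Fin (r * N) → Matrix (Fin w) (Fin w) (MvPolynomial ℕ K)}

lemma IsRPass.eq_of_reads [Nontrivial K] (hM : IsRPass N w r π M) {ℓ u v : ℕ} (hu : Reads M ℓ u)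
    (hv : Reads M ℓ v) : u = v := by
  classical
  obtain ⟨hℓ, i, j, hu⟩ := hu
  obtain ⟨_, i', j', hv⟩ := hv
  have hvars (a b : K) (x : ℕ) : (C a + C b * X x : MvPolynomial ℕ K).vars ⊆ {x} := by
    refine (vars_add_subset _ _).trans (Finset.union_subset (by simp) ((vars_mul _ _).trans ?_))
    exact Finset.union_subset (by simp) vars_X.subset
  obtain ⟨a, b, hab⟩ := hM.2.1 ⟨ℓ, hℓ⟩ i j
  obtain ⟨a', b', hab'⟩ := hM.2.1 ⟨ℓ, hℓ⟩ i' j'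
  rw [hab] at hu
  rw [hab'] at hv
  rw [Finset.mem_singleton.1 (hvars _ _ _ hu), Finset.mem_singleton.1 (hvars _ _ _ hv)]

-- Consecutive layers share an index, so only there can two entries reading `v` fail to lie on a
-- common path.
lemma IsRPass.le_succ_of_reads (hM : IsRPass N w r π M) {ℓ ℓ' v : ℕ} (hv : Reads M ℓ v)
    (hv' : Reads M ℓ' v) : ℓ' ≤ ℓ + 1 := by
  obtain ⟨hℓ, i, j, hv⟩ := hv
  obtain ⟨hℓ', i', j', hv'⟩ := hv'
  by_contra! hlt
  let path (p : Fin (r * N + 1)) : Fin w :=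
    if p.1 = ℓ then i else if p.1 = ℓ + 1 then j else if p.1 = ℓ' then i' else j'
  have hpath : path (Fin.castSucc ⟨ℓ, hℓ⟩) = i ∧ path (Fin.succ ⟨ℓ, hℓ⟩) = j := by simp [path]
  have hpath' : path (Fin.castSucc ⟨ℓ', hℓ'⟩) = i' ∧ path (Fin.succ ⟨ℓ', hℓ'⟩) = j' := by
    have h₁ : ℓ' ≠ ℓ := by omega
    have h₂ : ℓ' ≠ ℓ + 1 := by omega
    have h₃ : ℓ' + 1 ≠ ℓ := by omega
    simp [path, h₁, h₂, h₃]
  have := congrArg Fin.val (hM.2.2 path v ⟨ℓ, hℓ⟩ ⟨ℓ', hℓ'⟩ (by rwa [hpath.1, hpath.2])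
    (by rwa [hpath'.1, hpath'.2]))
  simp only at this
  omega

lemma IsRPass.readOnce [Nontrivial K] (hM : IsRPass N w r π M) : ReadOnce M := by
  intro ℓ₁ ℓ₂ ℓ₃ u v h₁₂ h₂₃ hR₁ hR₂ hR₃
  have := hM.le_succ_of_reads hR₁ hR₃
  obtain rfl | rfl : ℓ₂ = ℓ₁ ∨ ℓ₂ = ℓ₃ := by omega
  exacts [hM.eq_of_reads hR₁ hR₂, hM.eq_of_reads hR₃ hR₂]

end MultiPass

section RandomPartition

variable {α : Type*} [DecidableEq α]

lemma card_filter_powerset_inter_sdiff_le (X B : Finset α) (p q : Finset α → Prop)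
    [DecidablePred p] [DecidablePred q] :
    (X.powerset.filter fun A => p (A ∩ B) ∧ q (A \ B)).card ≤
      (B.powerset.filter p).card * ((X \ B).powerset.filter q).card := by
  rw [← Finset.card_product]
  refine Finset.card_le_card_of_injOn (fun A => (A ∩ B, A \ B)) (fun A hA => ?_)
    fun A _ A' _ h => ?_
  · simp only [Finset.coe_filter, Finset.mem_powerset, Set.mem_ofPred_eq] at hA
    simp only [Finset.coe_product, Set.mem_prod, Finset.coe_filter, Finset.mem_powerset,
      Set.mem_ofPred_eq]
    exact ⟨⟨Finset.inter_subset_right, hA.2.1⟩, Finset.sdiff_subset_sdiff hA.1 le_rfl, hA.2.2⟩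
  · simp only [Prod.mk.injEq] at h
    rw [← Finset.sdiff_union_inter A B, h.1, h.2, Finset.sdiff_union_inter]

lemma two_pow_mul_card_filter_powerset_le {ι : Type*} (J : Finset ι) {B : ι → Finset α}
    {P : ι → Finset α → Prop} [∀ j, DecidablePred (P j)]
    (hP : ∀ j ∈ J, 2 * ((B j).powerset.filter (P j)).card ≤ 2 ^ (B j).card)
    (hdisj : (J : Set ι).PairwiseDisjoint B) (X : Finset α) (hX : ∀ j ∈ J, B j ⊆ X) :
    2 ^ J.card * (X.powerset.filter fun A => ∀ j ∈ J, P j (A ∩ B j)).card ≤ 2 ^ X.card := by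
  classical
  induction J using Finset.induction_on generalizing X with
  | empty => simp
  | insert i J hi ih =>
    rw [Finset.coe_insert, Set.pairwiseDisjoint_insert_of_notMem (by simpa using hi)] at hdisj
    obtain ⟨hPi, hPJ⟩ := Finset.forall_mem_insert _ _ _ |>.1 hP
    obtain ⟨hXi, hXJ⟩ := Finset.forall_mem_insert _ _ _ |>.1 hX
    have hsplit (A : Finset α) : (∀ j ∈ insert i J, P j (A ∩ B j)) ↔
        P i (A ∩ B i) ∧ ∀ j ∈ J, P j ((A \ B i) ∩ B j) := by
      rw [Finset.forall_mem_insert]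
      refine and_congr_right fun _ => forall₂_congr fun j hj => ?_
      rw [Finset.sdiff_inter_right_comm, Finset.sdiff_eq_self_of_disjoint]
      exact (hdisj.2 j hj).symm.mono_left Finset.inter_subset_right
    have hrest := ih hPJ hdisj.1 (X \ B i) fun j hj =>
      Finset.subset_sdiff.2 ⟨hXJ j hj, (hdisj.2 j hj).symm⟩
    simp only [hsplit]
    calc 2 ^ (insert i J).card *
          (X.powerset.filter fun A => P i (A ∩ B i) ∧ ∀ j ∈ J, P j ((A \ B i) ∩ B j)).card
        ≤ 2 ^ (J.card + 1) * (((B i).powerset.filter (P i)).card *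
            ((X \ B i).powerset.filter fun A => ∀ j ∈ J, P j (A ∩ B j)).card) := by
          rw [Finset.card_insert_of_notMem hi]
          exact Nat.mul_le_mul_left _ (card_filter_powerset_inter_sdiff_le X (B i) (P i)
            fun A => ∀ j ∈ J, P j (A ∩ B j))
      _ = (2 * ((B i).powerset.filter (P i)).card) * (2 ^ J.card *
            ((X \ B i).powerset.filter fun A => ∀ j ∈ J, P j (A ∩ B j)).card) := by ring
      _ ≤ 2 ^ (B i).card * 2 ^ (X \ B i).card := Nat.mul_le_mul hPi hrest
      _ = 2 ^ X.card := by
          rw [← pow_add, add_comm, Finset.card_sdiff_add_card_eq_card hXi]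

lemma centralBinom_sq_mul_le (n : ℕ) : n.centralBinom ^ 2 * (2 * n + 1) ≤ 16 ^ n := by
  induction n with
  | zero => simp
  | succ n ih =>
    refine Nat.le_of_mul_le_mul_left ?_ (show 0 < (n + 1) ^ 2 by positivity)
    calc (n + 1) ^ 2 * ((n + 1).centralBinom ^ 2 * (2 * (n + 1) + 1))
        = ((n + 1) * (n + 1).centralBinom) ^ 2 * (2 * (n + 1) + 1) := by ring
      _ = (n.centralBinom ^ 2 * (2 * n + 1)) * (4 * ((2 * n + 1) * (2 * n + 3))) := by
          rw [Nat.succ_mul_centralBinom_succ]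
          ring
      _ ≤ 16 ^ n * (4 * (4 * (n + 1) ^ 2)) := Nat.mul_le_mul ih (by nlinarith)
      _ = (n + 1) ^ 2 * 16 ^ (n + 1) := by ring

lemma discrepancy_inter (A B : Finset α) : discrepancy (A ∩ B) B = discrepancy A B :=
  Finset.sum_congr rfl fun x hx => by simp [hx]

lemma card_filter_abs_discrepancy_lt_le (B : Finset α) {h : ℕ} (hB : B.card = 2 * h) (k : ℕ) :
    (B.powerset.filter fun S => |discrepancy S B| < 2 * k).card ≤ 2 * k * h.centralBinom := by
  calc (B.powerset.filter fun S => |discrepancy S B| < 2 * k).card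
      ≤ ((Finset.Ico (h + 1 - k) (h + k)).biUnion fun d => B.powersetCard d).card := by
        refine Finset.card_le_card fun S hS => ?_
        rw [Finset.mem_filter, Finset.mem_powerset, abs_lt] at hS
        have hcard := two_mul_card_inter S B
        rw [Finset.inter_eq_right.2 hS.1] at hcard
        simp only [Finset.mem_biUnion, Finset.mem_Ico, Finset.mem_powersetCard]
        exact ⟨S.card, by omega, hS.1, rfl⟩
    _ ≤ ∑ d ∈ Finset.Ico (h + 1 - k) (h + k), (B.powersetCard d).card := Finset.card_biUnion_le
    _ ≤ ∑ _d ∈ Finset.Ico (h + 1 - k) (h + k), h.centralBinom :=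
        Finset.sum_le_sum fun d _ => by
          rw [Finset.card_powersetCard, hB]
          exact Nat.choose_le_centralBinom d h
    _ ≤ 2 * k * h.centralBinom := by
        rw [Finset.sum_const, Nat.card_Ico, smul_eq_mul]
        exact Nat.mul_le_mul_right _ (by omega)

lemma two_mul_card_filter_abs_discrepancy_lt_le {B : Finset α} {k : ℕ}
    (hB : B.card = 16 * k ^ 2) :
    2 * (B.powerset.filter fun S => |discrepancy S B| < 2 * k).card ≤ 2 ^ B.card := by
  obtain ⟨h, hh⟩ : ∃ h, h = 8 * k ^ 2 := ⟨_, rfl⟩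
  have hB' : B.card = 2 * h := by omega
  have hbinom : 4 * k * h.centralBinom ≤ 4 ^ h := by
    refine (Nat.pow_le_pow_iff_left two_ne_zero).1 ?_
    calc (4 * k * h.centralBinom) ^ 2 = h.centralBinom ^ 2 * (2 * h) := by rw [hh]; ring
      _ ≤ h.centralBinom ^ 2 * (2 * h + 1) := Nat.mul_le_mul_left _ (Nat.le_succ _)
      _ ≤ 16 ^ h := centralBinom_sq_mul_le h
      _ = (4 ^ h) ^ 2 := by rw [pow_right_comm]; norm_num
  calc 2 * (B.powerset.filter fun S => |discrepancy S B| < 2 * k).card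
      ≤ 2 * (2 * k * h.centralBinom) :=
        Nat.mul_le_mul_left _ (card_filter_abs_discrepancy_lt_le B hB' k)
    _ = 4 * k * h.centralBinom := by ring
    _ ≤ 4 ^ h := hbinom
    _ = 2 ^ B.card := by rw [hB', pow_mul]; norm_num

-- A uniformly random subset of `X` has discrepancy zero with probability at least `1 / (2 n)`, and
-- leaves all `k` blocks of a given family nearly balanced with probability at most `2⁻ᵏ`.
lemma exists_discrepancy_eq_zero_forall_exists_le {ι : Type*} [Fintype ι] {X : Finset α} {n k : ℕ}
    (hn : 0 < n) (hX : X.card = 2 * n) (hι : Fintype.card ι * (2 * n) < 2 ^ k)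
    {B : ι → ℕ → Finset α} (hdisj : ∀ i, Pairwise (Function.onFun Disjoint (B i)))
    (hB : ∀ i, ∀ j < k, B i j ⊆ X ∧ (B i j).card = 16 * k ^ 2) :
    ∃ A, discrepancy A X = 0 ∧ ∀ i, ∃ j < k, (2 * k : ℤ) ≤ |discrepancy A (B i j)| := by
  classical
  let bad (i : ι) := X.powerset.filter fun A => ∀ j ∈ Finset.range k,
    |discrepancy (A ∩ B i j) (B i j)| < 2 * k
  have hbad (i : ι) : 2 ^ k * (bad i).card ≤ 4 ^ n := by
    have := two_pow_mul_card_filter_powerset_le (Finset.range k) (B := B i)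
      (P := fun j S => |discrepancy S (B i j)| < 2 * k)
      (fun j hj => two_mul_card_filter_abs_discrepancy_lt_le (hB i j (Finset.mem_range.1 hj)).2)
      ((hdisj i).set_pairwise _) X fun j hj => (hB i j (Finset.mem_range.1 hj)).1
    rwa [Finset.card_range, hX, pow_mul] at this
  have hcard : (Finset.univ.biUnion bad).card < (X.powersetCard n).card := by
    rw [Finset.card_powersetCard, hX]
    refine Nat.lt_of_mul_lt_mul_left (a := 2 ^ k) ?_
    calc 2 ^ k * (Finset.univ.biUnion bad).card
        ≤ ∑ i, 2 ^ k * (bad i).card := by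
          rw [← Finset.mul_sum]
          exact Nat.mul_le_mul_left _ Finset.card_biUnion_le
      _ ≤ Fintype.card ι * 4 ^ n := Finset.sum_le_card_nsmul _ _ _ fun i _ => hbad i
      _ ≤ Fintype.card ι * (2 * n * n.centralBinom) :=
          Nat.mul_le_mul_left _ (Nat.four_pow_le_two_mul_self_mul_centralBinom n hn)
      _ = Fintype.card ι * (2 * n) * n.centralBinom := by ring
      _ < 2 ^ k * n.centralBinom := Nat.mul_lt_mul_of_pos_right hι n.centralBinom_pos
  obtain ⟨A, hA, hAbad⟩ := Finset.exists_mem_notMem_of_card_lt_card hcard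
  obtain ⟨hAX, hAn⟩ := Finset.mem_powersetCard.1 hA
  refine ⟨A, ?_, fun i => ?_⟩
  · have := two_mul_card_inter A X
    rw [Finset.inter_eq_right.2 hAX] at this
    omega
  · have : A ∉ bad i := fun h => hAbad (Finset.mem_biUnion.2 ⟨i, Finset.mem_univ i, h⟩)
    simpa [bad, hAX, discrepancy_inter] using this

end RandomPartition

section LowerBound

lemma IsSegment.commRankLE_two_pow {K : Type*} [CommRing K] {n w d : ℕ}
    {M : Fin n → Matrix (Fin w) (Fin w) (MvPolynomial ℕ K)} {X B A : Finset ℕ}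
    (hB : IsSegment M X B) (hw : 0 < w) (hX : discrepancy A X = 0)
    (hd : (d : ℤ) ≤ |discrepancy A B|) :
    CommRankLE A X (fun S => evalIndicator S (mprodVal hw M)) (w ^ 2 * 2 ^ (X.card / 2 - d)) := by
  have hrank := hB.commRankLE hw (commRankLE_two_pow_min A B) (commRankLE_two_pow_min A (X \ B))
  rw [← pow_add] at hrank
  refine hrank.mono (Nat.mul_le_mul_left _ (Nat.pow_le_pow_right two_pos ?_))
  have hBmin := two_mul_min_card A B
  have hXmin := two_mul_min_card A (X \ B)
  have hcompl : discrepancy A (X \ B) = - discrepancy A B := by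
    have := discrepancy_union A (Finset.sdiff_disjoint (s := B) (t := X))
    rw [Finset.sdiff_union_of_subset hB.subset] at this
    omega
  rw [hcompl, abs_neg] at hXmin
  have := Finset.card_sdiff_add_card_eq_card hB.subset
  omega

theorem two_pow_le_of_razPoly_eq_sum {F : Type*} [Field F] {n k m : ℕ} (hn : 0 < n)
    (hk : k * (16 * k ^ 2) ≤ 2 * n) {len w : Fin m → ℕ} (hw : ∀ i, 0 < w i)
    {M : ∀ i, Fin (len i) → Matrix (Fin (w i)) (Fin (w i)) (MvPolynomial ℕ (Gf F))}
    (hM : ∀ i, ReadOnce (M i)) (hsum : razPoly F (2 * n) = ∑ i, mprodVal (hw i) (M i)) :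
    2 ^ k ≤ m * (2 * n) * Finset.univ.sup w ^ 2 := by
  set s := Finset.univ.sup w
  have hws (i : Fin m) : w i ≤ s := Finset.le_sup (Finset.mem_univ i)
  obtain hmn | hmn := lt_or_ge (m * (2 * n)) (2 ^ k)
  · have hX : (Finset.Icc 1 (2 * n)).card = 2 * n := by simp
    choose B hdisj hB using fun i => (hM i).exists_segments (hk.trans hX.ge)
    obtain ⟨A, hA, hunb⟩ := exists_discrepancy_eq_zero_forall_exists_le hn hX (by simpa) hdisj
      fun i j hj => ⟨(hB i j hj).1.subset, (hB i j hj).2⟩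
    have hrank (i : Fin m) : CommRankLE A (Finset.Icc 1 (2 * n))
        (fun S => evalIndicator S (mprodVal (hw i) (M i))) (s ^ 2 * 2 ^ (n - 2 * k)) := by
      obtain ⟨j, hj, hd⟩ := hunb i
      have := (hB i j hj).1.commRankLE_two_pow (hw i) hA (d := 2 * k) (by exact_mod_cast hd)
      rw [hX, Nat.mul_div_cancel_left n two_pos] at this
      exact this.mono (Nat.mul_le_mul_right _ (Nat.pow_le_pow_left (hws i) 2))
    have hle : 2 ^ n ≤ m * (s ^ 2 * 2 ^ (n - 2 * k)) := by
      refine (hasMinor_razPoly F hA).le_of_commRankLE ?_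
      simpa [hsum] using CommRankLE.sum hrank
    have h2k : 2 * k ≤ n := by
      obtain rfl | hk0 := k.eq_zero_or_pos
      · simp
      · nlinarith [Nat.mul_le_mul hk0 hk0]
    have h4k : 2 ^ (2 * k) ≤ m * s ^ 2 := by
      refine Nat.le_of_mul_le_mul_right ?_ (Nat.two_pow_pos (n - 2 * k))
      rwa [← pow_add, Nat.add_sub_cancel' h2k, mul_assoc]
    calc 2 ^ k ≤ 2 ^ (2 * k) := Nat.pow_le_pow_right two_pos (by omega)
      _ ≤ m * s ^ 2 := h4k
      _ ≤ m * s ^ 2 * (2 * n) := Nat.le_mul_of_pos_right _ (by omega)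
      _ = m * (2 * n) * s ^ 2 := by ring
  · have hm : 0 < m := pos_of_mul_pos_left ((Nat.two_pow_pos k).trans_le hmn) (Nat.zero_le _)
    have hs : 0 < s := (hw ⟨0, hm⟩).trans_le (hws _)
    exact hmn.trans (Nat.le_mul_of_pos_right _ (by positivity))

lemma eventually_mul_two_rpow_le_two_pow_floor :
    ∀ᶠ N : ℕ in Filter.atTop, (N : ℝ) * 2 ^ ((N : ℝ) ^ (1 / 3 : ℝ) / 4) ≤
      2 ^ ⌊(N : ℝ) ^ (1 / 3 : ℝ) / 3⌋₊ := by
  have hcube : ∀ᶠ x : ℝ in Filter.atTop, 2 * x ^ 3 ≤ 2 ^ (x / 12) := by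
    have hbound := (isLittleO_pow_exp_pos_mul_atTop (k := 3)
      (show 0 < Real.log 2 / 12 by positivity)).bound (show (0 : ℝ) < 1 / 2 by norm_num)
    filter_upwards [hbound] with x hx
    rw [Real.norm_eq_abs, Real.norm_eq_abs, Real.abs_exp] at hx
    rw [Real.rpow_def_of_pos two_pos, show Real.log 2 * (x / 12) = Real.log 2 / 12 * x by ring]
    linarith [le_abs_self (x ^ 3)]
  have hroot : Filter.Tendsto (fun N : ℕ => (N : ℝ) ^ (1 / 3 : ℝ)) Filter.atTop Filter.atTop :=
    (tendsto_rpow_atTop (by norm_num)).comp tendsto_natCast_atTop_atTop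
  filter_upwards [hroot.eventually hcube] with N hN
  set x := (N : ℝ) ^ (1 / 3 : ℝ)
  have hx : (N : ℝ) = x ^ 3 := by
    rw [← Real.rpow_natCast, ← Real.rpow_mul N.cast_nonneg]
    norm_num
  calc (N : ℝ) * 2 ^ (x / 4) = 2 * x ^ 3 * 2 ^ (x / 4 - 1) := by
        rw [hx, Real.rpow_sub_one two_ne_zero]
        ring
    _ ≤ 2 ^ (x / 12) * 2 ^ (x / 4 - 1) := by gcongr
    _ = 2 ^ (x / 3 - 1) := by
        rw [← Real.rpow_add two_pos]
        ring_nf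
    _ ≤ 2 ^ (⌊x / 3⌋₊ : ℝ) :=
        Real.rpow_le_rpow_of_exponent_le one_le_two (Nat.sub_one_lt_floor _).le
    _ = 2 ^ ⌊x / 3⌋₊ := Real.rpow_natCast _ _

lemma two_rpow_div_rpow_le {N r : ℝ} {s m : ℕ} (hN : 1 ≤ N) (hr : 1 ≤ r)
    (h : (2 : ℝ) ^ (N ^ (1 / 3 : ℝ) / 4) ≤ m * s ^ 2) :
    2 ^ (1 / 4 * N ^ (1 / 5 : ℝ)) / (s : ℝ) ^ (2 * (r + Real.logb 2 N)) ≤ m := by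
  have hs : 0 < s := by
    refine Nat.pos_of_ne_zero fun hs0 => h.not_gt ?_
    rw [hs0, Nat.cast_zero, zero_pow two_ne_zero, mul_zero]
    positivity
  have hroot : N ^ (1 / 5 : ℝ) ≤ N ^ (1 / 3 : ℝ) :=
    Real.rpow_le_rpow_of_exponent_le hN (by norm_num)
  have hlog : 0 ≤ Real.logb 2 N := Real.logb_nonneg one_lt_two hN
  rw [div_le_iff₀ (by positivity)]
  calc (2 : ℝ) ^ (1 / 4 * N ^ (1 / 5 : ℝ)) ≤ 2 ^ (N ^ (1 / 3 : ℝ) / 4) :=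
        Real.rpow_le_rpow_of_exponent_le one_le_two (by linarith)
    _ ≤ m * s ^ (2 : ℝ) := by rwa [Real.rpow_two]
    _ ≤ m * s ^ (2 * (r + Real.logb 2 N)) :=
        mul_le_mul_of_nonneg_left (Real.rpow_le_rpow_of_exponent_le (by exact_mod_cast hs)
          (by linarith)) m.cast_nonneg

theorem sum_of_rpass_lower_bound_general :
    ∃ N₀ : ℕ, ∀ (F : Type*) [Field F] (N : ℕ), N₀ ≤ N → Even N →
      ∀ (m : ℕ) (len w : Fin m → ℕ) (hw : ∀ i, 0 < w i)
        (M : ∀ i, Fin (len i) → Matrix (Fin (w i)) (Fin (w i)) (MvPolynomial ℕ (Gf F))),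
        (∀ i, ReadOnce (M i)) → razPoly F N = ∑ i, mprodVal (hw i) (M i) →
        (2 : ℝ) ^ ((N : ℝ) ^ (1 / 3 : ℝ) / 4) ≤ m * (Finset.univ.sup w : ℕ) ^ 2 := by
  obtain ⟨N₀, hN₀⟩ := Filter.eventually_atTop.1 eventually_mul_two_rpow_le_two_pow_floor
  refine ⟨max N₀ 1, fun F _ N hN hNeven m len w hw M hM hsum => ?_⟩
  obtain ⟨n, rfl⟩ := hNeven.two_dvd
  have hn : 0 < n := by omega
  set x := ((2 * n : ℕ) : ℝ) ^ (1 / 3 : ℝ) with hx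
  have hk : ⌊x / 3⌋₊ * (16 * ⌊x / 3⌋₊ ^ 2) ≤ 2 * n := by
    have hfloor : (⌊x / 3⌋₊ : ℝ) ≤ x / 3 := Nat.floor_le (by positivity)
    have hcube : x ^ 3 = (2 * n : ℕ) := by
      rw [hx, ← Real.rpow_natCast, ← Real.rpow_mul (Nat.cast_nonneg _)]
      norm_num
    rify
    calc (⌊x / 3⌋₊ : ℝ) * (16 * ⌊x / 3⌋₊ ^ 2) = 16 * ⌊x / 3⌋₊ ^ 3 := by ring
      _ ≤ 16 * (x / 3) ^ 3 := by gcongr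
      _ ≤ x ^ 3 := by nlinarith [show 0 ≤ x ^ 3 by positivity]
      _ = 2 * n := by rw [hcube]; push_cast; rfl
  refine le_of_mul_le_mul_left ?_ (show (0 : ℝ) < (2 * n : ℕ) by positivity)
  calc ((2 * n : ℕ) : ℝ) * 2 ^ (x / 4) ≤ 2 ^ ⌊x / 3⌋₊ := hN₀ _ ((le_max_left _ _).trans hN)
    _ ≤ ((m * (2 * n) * Finset.univ.sup w ^ 2 : ℕ) : ℝ) := by
        exact_mod_cast two_pow_le_of_razPoly_eq_sum hn hk hw hM hsum
    _ = (2 * n : ℕ) * (m * (Finset.univ.sup w : ℕ) ^ 2) := by push_cast; ring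

end LowerBound

/-- Theorem (sum of r-pass smABPs lower bound). -/
theorem sum_of_rpass_lower_bound :
    ∃ c₁ c₂ : ℝ, 0 < c₁ ∧ 0 < c₂ ∧ ∃ N₀ : ℕ, ∀ (F : Type) [Field F] (N : ℕ),
      N₀ ≤ N → Even N → ∀ (r : ℕ), 1 ≤ r →
      ∀ (m : ℕ) (sw : Fin m → ℕ) (hsw : ∀ i, 2 ≤ sw i)
        (π : Fin m → Fin r → ℕ → ℕ)
        (M : (i : Fin m) → Fin (r * N) →
          Matrix (Fin (sw i)) (Fin (sw i)) (MvPolynomial ℕ (Gf F))),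
        (∀ i, IsRPass N (sw i) r (π i) (M i)) →
        razPoly F N = ∑ i : Fin m, mprodVal (show 0 < sw i by have := hsw i; omega) (M i) →
        (2 : ℝ) ^ (c₁ * (N : ℝ) ^ ((1 : ℝ) / 5)) /
            ((Finset.univ.sup sw : ℕ) : ℝ) ^ (c₂ * ((r : ℝ) + Real.logb 2 N)) ≤ (m : ℝ) := by
  obtain ⟨N₀, hN₀⟩ := sum_of_rpass_lower_bound_general
  refine ⟨1 / 4, 2, by norm_num, by norm_num, max N₀ 1, ?_⟩
  intro F _ N hN hNeven r hr m sw hsw π M hM hsum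
  have hN1 : (1 : ℝ) ≤ N := by exact_mod_cast (le_max_right _ _).trans hN
  exact two_rpow_div_rpow_le hN1 (by exact_mod_cast hr) <|
    hN₀ F N ((le_max_left _ _).trans hN) hNeven m _ sw _ M (fun i => (hM i).readOnce) hsum

end
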